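/- Let P^y denote the law of a Brownian bridge from position 0 at time 0 to position y at time 1, and let K_1(a) denote the local time it accumulates at position a up to time 1. Then for every a > 0 and every y ≥ 0, E^y[exp(4a K_1(y)²)] ≤ E^0[exp(4a K_1(0)²)] and E^y[exp(4a K_1(−y)²)] ≤ E^0[exp(4a K_1(0)²)]. -/

import Mathlib

/- Formalization preamble: Brownian motion, (occupation-density) local time
fields, martingales with respect to a (raw) filtration, stochastic integrals
characterized through their quadratic (co)variations, weak solutions of the
exploration SDEs of Pardoux–Wakolbinger and of Feller's branching diffusion
with logistic growth (formulated, equivalently, as a martingale problem: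
`Z_t = x + ∫₀ᵗ Z_u (θ - γ(Z_u + 2 z(u))) du + M_t` where `M` is a continuous
martingale with quadratic variation `⟨M⟩_t = 4∫₀ᵗ Z_u du`, which encodes
`M_t = 2∫₀ᵗ √(Z_u) dW_u` for a standard Brownian motion `W`). -/

open MeasureTheory ProbabilityTheory Set
open scoped ENNReal NNReal

noncomputable section

/-- `B` is a standard Brownian motion (for nonnegative times) under `P`:
`B₀ = 0`, continuous paths, independent increments, and Gaussian increments
`B_t - B_s ∼ N(0, t-s)` for `0 ≤ s ≤ t`. -/
structure IsBrownianMotion {Ω : Type} [MeasurableSpace Ω] (P : Measure Ω)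
    (B : ℝ → Ω → ℝ) : Prop where
  isProb : IsProbabilityMeasure P
  meas : ∀ s, Measurable (B s)
  start : ∀ᵐ ω ∂P, B 0 ω = 0
  cont : ∀ᵐ ω ∂P, Continuous fun s => B s ω
  incr : ∀ s t : ℝ, 0 ≤ s → s ≤ t →
    P.map (fun ω => B t ω - B s ω) = gaussianReal 0 (t - s).toNNReal
  indep : ∀ (n : ℕ) (t : Fin (n + 1) → ℝ), Monotone t → 0 ≤ t 0 →
    iIndepFun
      (fun i : Fin n => fun ω => B (t i.succ) ω - B (t i.castSucc) ω) P

/-- `L` is the (semimartingale) local time field of the process `H`.  For all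
the processes considered here (Brownian motion plus a finite-variation part)
the quadratic variation is `⟨H⟩_s = s`, so local time is characterized as the
jointly continuous occupation density:
`∫₀ˢ f(H_r) dr = ∫ f(t) L_s(t) dt` for all nonnegative measurable `f`. -/
structure IsLocalTimeField {Ω : Type} [MeasurableSpace Ω] (P : Measure Ω)
    (H : ℝ → Ω → ℝ) (L : ℝ → ℝ → Ω → ℝ) : Prop where
  meas : ∀ s t, Measurable (L s t)
  nonneg : ∀ s t ω, 0 ≤ L s t ω
  zero : ∀ t ω, L 0 t ω = 0
  mono : ∀ t ω, Monotone fun s => L s t ω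
  cont : ∀ᵐ ω ∂P, Continuous fun p : ℝ × ℝ => L p.1 p.2 ω
  occupation : ∀ᵐ ω ∂P, ∀ s : ℝ, 0 ≤ s → ∀ f : ℝ → ℝ≥0∞, Measurable f →
    ∫⁻ r in Icc (0 : ℝ) s, f (H r ω) = ∫⁻ t, f t * ENNReal.ofReal (L s t ω)

/-- `z` is (an extension to `ℝ` of) an element of `E = C_c(ℝ₊, ℝ₊)`:
continuous, nonnegative, with compact support. -/
def GoodPath (z : ℝ → ℝ) : Prop :=
  Continuous z ∧ HasCompactSupport z ∧ ∀ t, 0 ≤ z t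

/-- `S_x = inf {s > 0 : L_s(0) > x}`, valued in `ℝ≥0∞` (`∞` if the level is
never reached). -/
def hitTime {Ω : Type} (L : ℝ → ℝ → Ω → ℝ) (x : ℝ) (ω : Ω) : ℝ≥0∞ :=
  ⨅ s ∈ {s : ℝ | 0 < s ∧ x < L s 0 ω}, ENNReal.ofReal s

/-- The real value of `S_x` (junk value `0` if `S_x = ∞`). -/
def hitTimeR {Ω : Type} (L : ℝ → ℝ → Ω → ℝ) (x : ℝ) (ω : Ω) : ℝ :=
  (hitTime L x ω).toReal

/-- A filtration, given as a monotone family of sub-σ-algebras. -/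
def IsFiltrationFamily {Ω : Type} [m0 : MeasurableSpace Ω] (F : ℝ → MeasurableSpace Ω) : Prop :=
  Monotone F ∧ ∀ t, F t ≤ m0

/-- `M` is a martingale with respect to the σ-algebras `F` along the index
set `T`: integrable, adapted, and `E[M_t | F_s] = M_s` for `s ≤ t` in `T`. -/
def IsMartingaleOn {Ω : Type} [MeasurableSpace Ω] (F : ℝ → MeasurableSpace Ω)
    (P : Measure Ω) (M : ℝ → Ω → ℝ) (T : Set ℝ) : Prop :=
  (∀ t ∈ T, Integrable (M t) P) ∧ (∀ t ∈ T, @StronglyMeasurable _ _ _ (F t) (M t)) ∧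
    ∀ s ∈ T, ∀ t ∈ T, s ≤ t → P[M t|F s] =ᵐ[P] M s

/-- `B` is a Brownian motion which is moreover an `F`-martingale with
`⟨B⟩_t = t` (i.e. an `F`-Brownian motion). -/
def IsBMFiltration {Ω : Type} [MeasurableSpace Ω] (F : ℝ → MeasurableSpace Ω)
    (P : Measure Ω) (B : ℝ → Ω → ℝ) : Prop :=
  IsBrownianMotion P B ∧ IsFiltrationFamily F ∧ IsMartingaleOn F P B (Ici 0) ∧
    IsMartingaleOn F P (fun t ω => B t ω ^ 2 - t) (Ici 0)

/-- `I` is (a version of) the stochastic integral `∫₀^· φ dB` against the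
`F`-Brownian motion `B`, characterized by: `I` is a continuous `F`-martingale
started at `0` with `⟨I⟩ = ∫₀^· φ² dr` and `⟨I, B⟩ = ∫₀^· φ dr`. -/
def IsStochIntegralBM {Ω : Type} [MeasurableSpace Ω] (F : ℝ → MeasurableSpace Ω)
    (P : Measure Ω) (B φ I : ℝ → Ω → ℝ) : Prop :=
  (∀ᵐ ω ∂P, I 0 ω = 0) ∧ (∀ᵐ ω ∂P, Continuous fun s => I s ω) ∧
  IsMartingaleOn F P I (Ici 0) ∧
  IsMartingaleOn F P (fun s ω => I s ω ^ 2 - ∫ r in Icc (0 : ℝ) s, φ r ω ^ 2) (Ici 0) ∧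
  IsMartingaleOn F P (fun s ω => I s ω * B s ω - ∫ r in Icc (0 : ℝ) s, φ r ω) (Ici 0)

/-- `(P, B, H, L)` is a weak solution of the exploration SDE
`H_s = B_s + ½ L_s(0) + (θ/2) s − γ ∫₀ˢ (z(H_r) + L_r(H_r)) dr`, `s ≥ 0`,
where `L` is the local time field of `H` and `H` is reflected above `0`. -/
def SolvesExplorSDE (θ γ : ℝ) (z : ℝ → ℝ) {Ω : Type} [MeasurableSpace Ω] (P : Measure Ω)
    (B H : ℝ → Ω → ℝ) (L : ℝ → ℝ → Ω → ℝ) : Prop :=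
  IsBrownianMotion P B ∧ IsLocalTimeField P H L ∧ (∀ s, Measurable (H s)) ∧
  (∀ᵐ ω ∂P, Continuous fun s => H s ω) ∧
  (∀ᵐ ω ∂P, ∀ s, 0 ≤ s → 0 ≤ H s ω) ∧
  (∀ᵐ ω ∂P, ∀ s, 0 ≤ s →
    H s ω = B s ω + (1 / 2) * L s 0 ω + (θ / 2) * s
      - γ * ∫ r in Icc (0 : ℝ) s, (z (H r ω) + L r (H r ω) ω))

/-- `(P, B, H, L)` is a weak solution of the exploration SDE reflected in the
interval `[0, K]`:
`H_s = B_s + (θ/2) s − γ ∫₀ˢ (z(H_r) + L_r(H_r)) dr + ½ L_s(0) − ½ L_s(K⁻)`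
(for the jointly continuous local time field, `L_s(K⁻) = L_s(K)`). -/
def SolvesReflectedExplorSDE (θ γ : ℝ) (z : ℝ → ℝ) (K : ℝ) {Ω : Type} [MeasurableSpace Ω]
    (P : Measure Ω) (B H : ℝ → Ω → ℝ) (L : ℝ → ℝ → Ω → ℝ) : Prop :=
  IsBrownianMotion P B ∧ IsLocalTimeField P H L ∧ (∀ s, Measurable (H s)) ∧
  (∀ᵐ ω ∂P, Continuous fun s => H s ω) ∧
  (∀ᵐ ω ∂P, ∀ s, 0 ≤ s → H s ω ∈ Icc 0 K) ∧
  (∀ᵐ ω ∂P, ∀ s, 0 ≤ s →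
    H s ω = B s ω + (θ / 2) * s
      - γ * (∫ r in Icc (0 : ℝ) s, (z (H r ω) + L r (H r ω) ω))
      + (1 / 2) * L s 0 ω - (1 / 2) * L s K ω)

/-- `Z` solves `Z_t = x + ∫₀ᵗ Z_u (θ − γ(Z_u + 2·env(u))) du + 2∫₀ᵗ √(Z_u) dW_u`
(with a possibly random environment `env`), formulated as: `Z_t - x - ∫₀ᵗ …du`
equals a continuous `F`-martingale `M` with `⟨M⟩_t = 4 ∫₀ᵗ Z_u du`. -/
structure SolvesLogisticAux (θ γ : ℝ) {Ω : Type} [MeasurableSpace Ω]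
    (env : ℝ → Ω → ℝ) (x : ℝ) (P : Measure Ω) (F : ℝ → MeasurableSpace Ω)
    (Z M : ℝ → Ω → ℝ) : Prop where
  isProb : IsProbabilityMeasure P
  filt : IsFiltrationFamily F
  measZ : ∀ t, Measurable (Z t)
  adaptedZ : ∀ t, 0 ≤ t → @StronglyMeasurable _ _ _ (F t) (Z t)
  contZ : ∀ᵐ ω ∂P, Continuous fun t => Z t ω
  nonnegZ : ∀ᵐ ω ∂P, ∀ t, 0 ≤ t → 0 ≤ Z t ω
  init : ∀ᵐ ω ∂P, Z 0 ω = x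
  contM : ∀ᵐ ω ∂P, Continuous fun t => M t ω
  startM : ∀ᵐ ω ∂P, M 0 ω = 0
  mart : IsMartingaleOn F P M (Ici 0)
  qv : IsMartingaleOn F P
    (fun t ω => M t ω ^ 2 - 4 * ∫ u in Icc (0 : ℝ) t, Z u ω) (Ici 0)
  sde : ∀ᵐ ω ∂P, ∀ t, 0 ≤ t →
    Z t ω = x + (∫ u in Icc (0 : ℝ) t, Z u ω * (θ - γ * (Z u ω + 2 * env u ω))) + M t ω

/-- `Z` is a weak solution of Feller's branching diffusion with logistic
growth in the (deterministic) environment `z`, with ancestral mass `x`: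
`Z_t = x + ∫₀ᵗ Z_u (θ − γ(Z_u + 2 z(u))) du + 2 ∫₀ᵗ √(Z_u) dW_u`. -/
def SolvesLogisticSDE (θ γ : ℝ) (z : ℝ → ℝ) (x : ℝ) {Ω : Type} [MeasurableSpace Ω]
    (P : Measure Ω) (Z : ℝ → Ω → ℝ) : Prop :=
  ∃ F M, SolvesLogisticAux θ γ (fun u _ => z u) x P F Z M

/-- As `SolvesLogisticAux`, but only on the time interval `[0, K)`
(the solution "killed at time `K`"). -/
structure SolvesLogisticAuxUpTo (θ γ : ℝ) {Ω : Type} [MeasurableSpace Ω]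
    (env : ℝ → Ω → ℝ) (x K : ℝ) (P : Measure Ω) (F : ℝ → MeasurableSpace Ω)
    (Z M : ℝ → Ω → ℝ) : Prop where
  isProb : IsProbabilityMeasure P
  filt : IsFiltrationFamily F
  measZ : ∀ t, Measurable (Z t)
  adaptedZ : ∀ t ∈ Ico (0 : ℝ) K, @StronglyMeasurable _ _ _ (F t) (Z t)
  contZ : ∀ᵐ ω ∂P, ContinuousOn (fun t => Z t ω) (Ico 0 K)
  nonnegZ : ∀ᵐ ω ∂P, ∀ t ∈ Ico (0 : ℝ) K, 0 ≤ Z t ω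
  init : ∀ᵐ ω ∂P, Z 0 ω = x
  contM : ∀ᵐ ω ∂P, ContinuousOn (fun t => M t ω) (Ico 0 K)
  startM : ∀ᵐ ω ∂P, M 0 ω = 0
  mart : IsMartingaleOn F P M (Ico 0 K)
  qv : IsMartingaleOn F P
    (fun t ω => M t ω ^ 2 - 4 * ∫ u in Icc (0 : ℝ) t, Z u ω) (Ico 0 K)
  sde : ∀ᵐ ω ∂P, ∀ t ∈ Ico (0 : ℝ) K,
    Z t ω = x + (∫ u in Icc (0 : ℝ) t, Z u ω * (θ - γ * (Z u ω + 2 * env u ω))) + M t ω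

/-- The path `z + Z(ω)`, where the random part is put to `0` at negative
times (paths indexed by `ℝ₊` are modelled as functions on `ℝ`). -/
def extendPath {Ω : Type} (z : ℝ → ℝ) (Z : ℝ → Ω → ℝ) (ω : Ω) : ℝ → ℝ :=
  fun t => z t + if 0 ≤ t then Z t ω else 0

/-- `κ` is the family of transition probabilities `(P_x)_{x ≥ 0}` on
`E = C_c(ℝ₊, ℝ₊)`: `P_0(z, ·) = δ_z` and, for `x > 0`, `P_x(z, ·)` is the law
of `z + Z^{x,z}`, where `Z^{x,z}` is any weak solution of the logistic
Feller SDE in environment `z` with ancestral mass `x`. -/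
def IsLogisticKernelFamily (θ γ : ℝ)
    (κ : ℝ → Kernel (ℝ → ℝ) (ℝ → ℝ)) : Prop :=
  (∀ x, IsMarkovKernel (κ x)) ∧
  (∀ z : ℝ → ℝ, GoodPath z → (κ 0) z = Measure.dirac z) ∧
  ∀ x : ℝ, 0 < x → ∀ z : ℝ → ℝ, GoodPath z →
    ∀ (Ω : Type) (_ : MeasurableSpace Ω) (P : Measure Ω) (Z : ℝ → Ω → ℝ),
      SolvesLogisticSDE θ γ z x P Z →
      (κ x) z = P.map (extendPath z Z)

end


theorem lintegral_pi_fin_prod {n : ℕ} (μ : Fin n → Measure ℝ) [∀ i, SigmaFinite (μ i)]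
    (f : Fin n → ℝ → ℝ≥0∞) (hf : ∀ i, Measurable (f i)) :
    ∫⁻ x, ∏ i, f i (x i) ∂Measure.pi μ = ∏ i, ∫⁻ x, f i x ∂μ i := by
  induction n with
  | zero => simp
  | succ n ih =>
    rw [← (measurePreserving_piFinSuccAbove μ 0).symm.lintegral_comp_emb
      (MeasurableEquiv.measurableEmbedding _)]
    simp only [MeasurableEquiv.piFinSuccAbove_symm_apply, Fin.insertNthEquiv, Fin.prod_univ_succ]
    simp only [Equiv.coe_fn_mk, Fin.insertNth_zero', Fin.cons_zero, Fin.cons_succ,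
      Fin.zero_succAbove]
    rw [lintegral_prod_mul (f := f 0) (g := fun x : Fin n → ℝ => ∏ i, f i.succ (x i))
      (hf 0).aemeasurable
      (Finset.measurable_prod _ fun i _ => (hf i.succ).comp (measurable_pi_apply i)).aemeasurable,
      ih _ _ fun i => hf i.succ]

theorem pi_withDensity_fin {n : ℕ} (f : Fin n → ℝ → ℝ≥0∞) (hf : ∀ i, Measurable (f i))
    [∀ i, SigmaFinite ((volume : Measure ℝ).withDensity (f i))] :
    Measure.pi (fun i => (volume : Measure ℝ).withDensity (f i)) =
      (volume : Measure (Fin n → ℝ)).withDensity fun x => ∏ i, f i (x i) := by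
  refine (Measure.pi_eq fun s hs => ?_)
  rw [withDensity_apply _ (MeasurableSet.univ_pi hs), ← lintegral_indicator (MeasurableSet.univ_pi hs)]
  have : ∀ x : Fin n → ℝ, (Set.univ.pi s).indicator (fun x => ∏ i, f i (x i)) x =
      ∏ i, (s i).indicator (f i) (x i) := by
    intro x
    by_cases hx : x ∈ Set.univ.pi s
    · rw [indicator_of_mem hx]
      exact Finset.prod_congr rfl fun i _ => (indicator_of_mem (hx i trivial) _).symm
    · rw [indicator_of_notMem hx]
      simp only [Set.mem_pi, not_forall] at hx
      obtain ⟨i, _, hi⟩ := hx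
      exact (Finset.prod_eq_zero (Finset.mem_univ i) (indicator_of_notMem hi _)).symm
  simp_rw [this, volume_pi]
  rw [lintegral_pi_fin_prod _ _ fun i => (hf i).indicator (hs i)]
  exact Finset.prod_congr rfl fun i _ => by
    rw [lintegral_indicator (hs i), withDensity_apply _ (hs i)]

theorem lintegral_fin_perm {n : ℕ} (σ : Equiv.Perm (Fin n)) (F : (Fin n → ℝ) → ℝ≥0∞) :
    ∫⁻ s, F (s ∘ σ) = ∫⁻ s, F s := by
  have := (volume_measurePreserving_piCongrLeft (fun _ : Fin n => ℝ) σ⁻¹).lintegral_comp_emb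
    (MeasurableEquiv.measurableEmbedding _) F
  rw [← this]
  congr 1 with s
  congr 1 with i
  have h := Equiv.piCongrLeft_apply_apply (fun _ : Fin n => ℝ) σ⁻¹ s (σ i)
  rw [Equiv.Perm.inv_def, Equiv.symm_apply_apply] at h
  exact h.symm

theorem ae_injective_fin (n : ℕ) : ∀ᵐ s : Fin n → ℝ, Function.Injective s := by
  have : ∀ i j : Fin n, ∀ᵐ s : Fin n → ℝ, s i = s j → i = j := by
    intro i j
    by_cases hij : i = j
    · exact Filter.Eventually.of_forall fun _ _ => hij
    have h0 : volume ((LinearMap.ker (LinearMap.proj (R := ℝ) (φ := fun _ : Fin n => ℝ) i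
      - LinearMap.proj j) : Submodule ℝ (Fin n → ℝ)) : Set (Fin n → ℝ)) = 0 := by
      apply Measure.addHaar_submodule
      intro h
      have : (Pi.single i 1 : Fin n → ℝ) ∈ LinearMap.ker (LinearMap.proj (R := ℝ)
        (φ := fun _ : Fin n => ℝ) i - LinearMap.proj j) := h ▸ trivial
      simp [LinearMap.mem_ker, Ne.symm hij] at this
    filter_upwards [compl_mem_ae_iff.2 h0] with s hs he
    exact (hs (by simp [LinearMap.mem_ker, he])).elim
  filter_upwards [ae_all_iff.2 fun i => ae_all_iff.2 (this i)] with s hs i j using hs i j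

theorem measurableSet_strictMono_fin (k : ℕ) : MeasurableSet {s : Fin k → ℝ | StrictMono s} := by
  have : {s : Fin k → ℝ | StrictMono s} = ⋂ i, ⋂ j, ⋂ (_ : i < j), {s | s i < s j} := by
    ext s; simp [StrictMono]
  rw [this]
  exact .iInter fun i => .iInter fun j => .iInter fun _ =>
    measurableSet_lt (measurable_pi_apply i) (measurable_pi_apply j)

theorem lintegral_symm_eq_factorial {n : ℕ} (F : (Fin n → ℝ) → ℝ≥0∞) (hF : Measurable F)
    (hsymm : ∀ (σ : Equiv.Perm (Fin n)) s, F (s ∘ σ) = F s) :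
    ∫⁻ s, F s = (n.factorial : ℝ≥0∞) * ∫⁻ s in {s | StrictMono s}, F s := by
  have hms := measurableSet_strictMono_fin n
  have key : ∀ᵐ s : Fin n → ℝ, F s = ∑ σ : Equiv.Perm (Fin n),
      {s : Fin n → ℝ | StrictMono s}.indicator F (s ∘ σ) := by
    filter_upwards [ae_injective_fin n] with s hs
    rw [Finset.sum_eq_single (Tuple.sort s)]
    · rw [indicator_of_mem, hsymm]
      exact (Tuple.monotone_sort s).strictMono_of_injective (hs.comp (Tuple.sort s).injective)
    · intro σ _ hσ
      apply indicator_of_notMem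
      intro h
      apply hσ
      have := Tuple.unique_monotone h.monotone (Tuple.monotone_sort s)
      ext i
      have := hs (congrFun this i)
      rw [this]
    · simp
  rw [lintegral_congr_ae key, lintegral_finsetSum]
  · simp_rw [lintegral_fin_perm _ ({s : Fin n → ℝ | StrictMono s}.indicator F),
      lintegral_indicator hms]
    simp [Fintype.card_perm]
  · intro σ _
    exact (hF.indicator hms).comp (measurable_pi_lambda _ fun i => measurable_pi_apply _)

noncomputable section

/-- The times (or positions) `0, s₀, …, s_{k-1}, u`. -/
def grid {k : ℕ} (s : Fin k → ℝ) (u : ℝ) : Fin (k + 2) → ℝ :=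
  Fin.cons 0 (Fin.snoc (α := fun _ => ℝ) s u)

@[simp] theorem grid_zero {k : ℕ} (s : Fin k → ℝ) (u : ℝ) : grid s u 0 = 0 := rfl

@[simp] theorem grid_last {k : ℕ} (s : Fin k → ℝ) (u : ℝ) : grid s u (Fin.last (k + 1)) = u := by
  rw [← Fin.succ_last]; simp [grid]

@[simp] theorem grid_succ_castSucc {k : ℕ} (s : Fin k → ℝ) (u : ℝ) (i : Fin k) :
    grid s u i.castSucc.succ = s i := by
  simp [grid]

theorem forall_fin_grid {k : ℕ} {p : Fin (k + 2) → Prop} (h0 : p 0)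
    (hs : ∀ i : Fin k, p i.castSucc.succ) (hl : p (Fin.last (k + 1))) : ∀ i, p i := by
  intro i
  refine Fin.cases h0 (fun j => ?_) i
  refine Fin.lastCases ?_ (fun j => ?_) j
  · rwa [Fin.succ_last]
  · exact hs j

theorem sum_fin_succ_sub_castSucc {n : ℕ} (f : Fin (n + 1) → ℝ) :
    ∑ i : Fin n, (f i.succ - f i.castSucc) = f (Fin.last n) - f 0 := by
  have h1 := Fin.sum_univ_succ f
  have h2 := Fin.sum_univ_castSucc f
  rw [Finset.sum_sub_distrib]; linarith

theorem LinearMap.det_eq_one_of_triangular {n : ℕ} (f : (Fin n → ℝ) →ₗ[ℝ] Fin n → ℝ)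
    (hdiag : ∀ i, f (Pi.single i 1) i = 1)
    (h : (∀ i j, i < j → f (Pi.single j 1) i = 0) ∨ ∀ i j, j < i → f (Pi.single j 1) i = 0) :
    LinearMap.det f = 1 := by
  rw [← LinearMap.det_toMatrix']
  have hd : ∏ i, LinearMap.toMatrix' f i i = 1 :=
    Finset.prod_eq_one fun i _ => by rw [LinearMap.toMatrix'_apply, hdiag]
  rcases h with h | h
  · rw [Matrix.det_of_isLowerTriangular, hd]
    intro i j hij
    rw [LinearMap.toMatrix'_apply]
    exact h i j hij
  · rw [Matrix.det_of_isUpperTriangular, hd]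
    intro i j hij
    rw [LinearMap.toMatrix'_apply]
    exact h i j hij

/-- The successive differences of a sequence, starting from `0`. -/
def diffMap (n : ℕ) : (Fin (n + 1) → ℝ) →ₗ[ℝ] Fin (n + 1) → ℝ where
  toFun x j := x j - (Fin.cons 0 x : Fin (n + 2) → ℝ) j.castSucc
  map_add' x y := by
    ext j
    refine Fin.cases ?_ (fun i => ?_) j
    · simp
    · simp only [← Fin.succ_castSucc, Fin.cons_succ, Pi.add_apply]; ring
  map_smul' c x := by
    ext j
    refine Fin.cases ?_ (fun i => ?_) j
    · simp
    · simp only [← Fin.succ_castSucc, Fin.cons_succ, Pi.smul_apply, smul_eq_mul,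
        RingHom.id_apply]; ring

theorem det_diffMap (n : ℕ) : LinearMap.det (diffMap n) = 1 := by
  apply LinearMap.det_eq_one_of_triangular
  · intro i
    refine Fin.cases ?_ (fun i => ?_) i
    · simp [diffMap]
    · simp [diffMap, Fin.ext_iff]
  · left
    intro i j
    refine Fin.cases ?_ (fun i => ?_) i
    · intro h
      simp [diffMap, h.ne]
    · intro h
      have h' : i.castSucc < j := (Fin.castSucc_lt_succ (i := i)).trans h
      simp [diffMap, h.ne, h'.ne]

/-- The shear `(z, b) ↦ (z + b s, b)`. -/
def shearMap {k : ℕ} (s : Fin k → ℝ) : (Fin (k + 1) → ℝ) →ₗ[ℝ] Fin (k + 1) → ℝ where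
  toFun w := Fin.snoc (α := fun _ => ℝ) (fun i => w i.castSucc + s i * w (Fin.last k))
    (w (Fin.last k))
  map_add' x y := by
    ext j
    refine Fin.lastCases ?_ (fun i => ?_) j
    · simp
    · simp only [Fin.snoc_castSucc, Pi.add_apply]; ring
  map_smul' c x := by
    ext j
    refine Fin.lastCases ?_ (fun i => ?_) j
    · simp
    · simp only [Fin.snoc_castSucc, Pi.smul_apply, smul_eq_mul, RingHom.id_apply]; ring

theorem det_shearMap {k : ℕ} (s : Fin k → ℝ) : LinearMap.det (shearMap s) = 1 := by
  apply LinearMap.det_eq_one_of_triangular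
  · intro i
    refine Fin.lastCases ?_ (fun i => ?_) i
    · simp [shearMap]
    · simp [shearMap, Pi.single_apply, Fin.ext_iff, i.2.ne']
  · right
    intro i j
    refine Fin.lastCases ?_ (fun i => ?_) i
    · intro h
      simp [shearMap, Pi.single_apply, h.ne']
    · intro h
      have h' : j < Fin.last k := h.trans (Fin.castSucc_lt_last i)
      simp [shearMap, Pi.single_apply, h.ne', h'.ne']

/-- The map sending the values `z` of a bridge at the times `s` and the endpoint `b` of the
underlying Brownian motion to the increments of that Brownian motion. -/
def incrMap {k : ℕ} (s : Fin k → ℝ) : (Fin (k + 1) → ℝ) →ₗ[ℝ] Fin (k + 1) → ℝ :=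
  diffMap k ∘ₗ shearMap s

theorem incrMap_apply {k : ℕ} (s : Fin k → ℝ) (w : Fin (k + 1) → ℝ) (j : Fin (k + 1)) :
    incrMap s w j =
      (grid (fun i => w i.castSucc) 0 j.succ - grid (fun i => w i.castSucc) 0 j.castSucc) +
        (grid s 1 j.succ - grid s 1 j.castSucc) * w (Fin.last k) := by
  have key : ∀ i : Fin (k + 2), (Fin.cons 0 (shearMap s w) : Fin (k + 2) → ℝ) i =
      grid (fun i => w i.castSucc) 0 i + grid s 1 i * w (Fin.last k) := by
    refine forall_fin_grid ?_ (fun i => ?_) ?_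
    · simp
    · simp [shearMap]
    · rw [grid_last, grid_last, ← Fin.succ_last]
      simp [shearMap]
  have h1 := key j.succ
  have h2 := key j.castSucc
  rw [Fin.cons_succ] at h1
  simp only [incrMap, diffMap, LinearMap.comp_apply, LinearMap.coe_mk, AddHom.coe_mk]
  rw [h1, h2]; ring

theorem det_incrMap {k : ℕ} (s : Fin k → ℝ) : LinearMap.det (incrMap s) = 1 := by
  rw [incrMap, LinearMap.det_comp, det_diffMap, det_shearMap, one_mul]

theorem measurePreserving_incrMap {k : ℕ} (s : Fin k → ℝ) :
    MeasurePreserving (incrMap s) volume volume := by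
  refine ⟨(LinearMap.continuous_of_finiteDimensional _).measurable, ?_⟩
  rw [Real.map_linearMap_volume_pi_eq_smul_volume_pi (by rw [det_incrMap]; exact one_ne_zero),
    det_incrMap]
  simp

theorem measurableEmbedding_incrMap {k : ℕ} (s : Fin k → ℝ) :
    MeasurableEmbedding (incrMap s) := by
  refine (LinearMap.continuous_of_finiteDimensional _).measurableEmbedding ?_
  exact (LinearMap.equivOfDetNeZero (incrMap s)
    (by rw [det_incrMap]; exact one_ne_zero)).injective

/-- The density at `0` of the vector of values at times `s` of the standard Brownian bridge. -/
def bridgeDensity {k : ℕ} (s : Fin k → ℝ) : ℝ :=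
  √(2 * Real.pi) * ∏ j : Fin (k + 1), (√(2 * Real.pi * (grid s 1 j.succ - grid s 1 j.castSucc)))⁻¹

theorem bridgeDensity_nonneg {k : ℕ} (s : Fin k → ℝ) : 0 ≤ bridgeDensity s := by
  unfold bridgeDensity; positivity

/-- The energy of the piecewise linear path with values `z` at times `s`, pinned to `0` at
times `0` and `1`. -/
def bridgeEnergy {k : ℕ} (s z : Fin k → ℝ) : ℝ :=
  ∑ j : Fin (k + 1), (grid z 0 j.succ - grid z 0 j.castSucc) ^ 2 /
    (2 * (grid s 1 j.succ - grid s 1 j.castSucc))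

theorem prod_gaussianPDF_incrMap {k : ℕ} (s : Fin k → ℝ) (hs : StrictMono (grid s 1))
    (w : Fin (k + 1) → ℝ) :
    ∏ j, gaussianPDF 0 (grid s 1 j.succ - grid s 1 j.castSucc).toNNReal (incrMap s w j) =
      ENNReal.ofReal (bridgeDensity s * Real.exp (-bridgeEnergy s fun i => w i.castSucc)) *
        gaussianPDF 0 1 (w (Fin.last k)) := by
  set t := grid s 1 with ht
  set z := grid (fun i : Fin k => w i.castSucc) 0 with hz
  set b := w (Fin.last k) with hb
  have hpos : ∀ j : Fin (k + 1), 0 < t j.succ - t j.castSucc := fun j =>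
    sub_pos.2 (hs Fin.castSucc_lt_succ)
  simp only [gaussianPDF]
  rw [← ENNReal.ofReal_prod_of_nonneg fun j _ => gaussianPDFReal_nonneg _ _ _,
    ← ENNReal.ofReal_mul (mul_nonneg (bridgeDensity_nonneg s) (Real.exp_nonneg _))]
  congr 1
  simp only [gaussianPDFReal, Finset.prod_mul_distrib, Real.coe_toNNReal _ (hpos _).le,
    ← Real.exp_sum, sub_zero, NNReal.coe_one, mul_one]
  have hE : ∑ j : Fin (k + 1), -incrMap s w j ^ 2 / (2 * (t j.succ - t j.castSucc)) =
      -bridgeEnergy s (fun i => w i.castSucc) + -b ^ 2 / 2 := by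
    have h1 : ∀ j : Fin (k + 1), -incrMap s w j ^ 2 / (2 * (t j.succ - t j.castSucc)) =
        -((z j.succ - z j.castSucc) ^ 2 / (2 * (t j.succ - t j.castSucc)))
        - b * (z j.succ - z j.castSucc) - b ^ 2 / 2 * (t j.succ - t j.castSucc) := by
      intro j
      rw [incrMap_apply]
      have := (hpos j).ne'
      field_simp
      ring
    rw [Finset.sum_congr rfl fun j _ => h1 j, Finset.sum_sub_distrib, Finset.sum_sub_distrib,
      ← Finset.mul_sum, ← Finset.mul_sum, sum_fin_succ_sub_castSucc, sum_fin_succ_sub_castSucc,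
      Finset.sum_neg_distrib, hz, ht]
    simp only [grid_last, grid_zero, bridgeEnergy]
    ring
  rw [hE, Real.exp_add, bridgeDensity]
  have : √(2 * Real.pi) * (√(2 * Real.pi))⁻¹ = 1 := mul_inv_cancel₀ (by positivity)
  linear_combination (-(∏ j : Fin (k + 1), (√(2 * Real.pi * (t j.succ - t j.castSucc)))⁻¹) *
    Real.exp (-bridgeEnergy s fun i => w i.castSucc) * Real.exp (-b ^ 2 / 2)) * this

theorem bridge_box_measure {Ω : Type} [MeasurableSpace Ω] {P : Measure Ω} {β : ℝ → Ω → ℝ}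
    (hβ : IsBrownianMotion P β) {k : ℕ} (s : Fin k → ℝ) (hs : StrictMono (grid s 1))
    (A : Fin k → Set ℝ) (hA : ∀ i, MeasurableSet (A i)) :
    P {ω | ∀ i, β (s i) ω - s i * β 1 ω ∈ A i} =
      ∫⁻ w : Fin (k + 1) → ℝ in {w | ∀ i : Fin k, w i.castSucc ∈ A i},
        ENNReal.ofReal (bridgeDensity s * Real.exp (-bridgeEnergy s fun i => w i.castSucc)) *
        gaussianPDF 0 1 (w (Fin.last k)) := by
  have := hβ.isProb
  set t := grid s 1 with ht
  have hpos : ∀ j : Fin (k + 1), 0 < t j.succ - t j.castSucc := fun j =>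
    sub_pos.2 (hs Fin.castSucc_lt_succ)
  have ht0 : ∀ i, 0 ≤ t i := fun i => by
    have := hs.monotone (Fin.zero_le i); rwa [ht, grid_zero] at this
  have hlaw : P.map (fun ω (j : Fin (k + 1)) => β (t j.succ) ω - β (t j.castSucc) ω) =
      volume.withDensity fun g => ∏ j,
        gaussianPDF 0 (t j.succ - t j.castSucc).toNNReal (g j) := by
    have h1 := (iIndepFun_iff_map_fun_eq_pi_map (fun j : Fin (k + 1) =>
      ((hβ.meas (t j.succ)).sub (hβ.meas (t j.castSucc))).aemeasurable)).1
      (hβ.indep (k + 1) t hs.monotone (ht0 0))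
    have h2 : ∀ j : Fin (k + 1), P.map (fun ω => β (t j.succ) ω - β (t j.castSucc) ω) =
        volume.withDensity (gaussianPDF 0 (t j.succ - t j.castSucc).toNNReal) := fun j => by
      rw [hβ.incr _ _ (ht0 _) (hs Fin.castSucc_lt_succ).le, gaussianReal_of_var_ne_zero]
      simpa using hs (Fin.castSucc_lt_succ (i := j))
    refine h1.trans ?_
    have h3 : (fun j : Fin (k + 1) => P.map (β (t j.succ) - β (t j.castSucc))) = fun j =>
        volume.withDensity (gaussianPDF 0 (t j.succ - t j.castSucc).toNNReal) := funext h2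
    rw [h3]
    have (j : Fin (k + 1)) : SigmaFinite ((volume : Measure ℝ).withDensity
        (gaussianPDF 0 (t j.succ - t j.castSucc).toNNReal)) := by
      rw [← h2 j]; infer_instance
    exact pi_withDensity_fin _ fun j => measurable_gaussianPDF _ _
  set B := {w : Fin (k + 1) → ℝ | ∀ i : Fin k, w i.castSucc ∈ A i} with hB
  have hBm : MeasurableSet B := by
    rw [hB, ofPred_forall]
    exact .iInter fun i => (measurable_pi_apply _) (hA i)
  have hemb := measurableEmbedding_incrMap s
  have hset : {ω | ∀ i, β (s i) ω - s i * β 1 ω ∈ A i} =ᵐ[P]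
      (fun ω (j : Fin (k + 1)) => β (t j.succ) ω - β (t j.castSucc) ω) ⁻¹'
        (incrMap s '' B) := by
    refine Filter.eventuallyEq_set.2 ?_
    filter_upwards [hβ.start] with ω hω
    have hw : (fun j : Fin (k + 1) => β (t j.succ) ω - β (t j.castSucc) ω) =
        incrMap s (Fin.snoc (α := fun _ => ℝ) (fun i => β (s i) ω - s i * β 1 ω) (β 1 ω)) := by
      ext j
      rw [incrMap_apply]
      simp only [Fin.snoc_castSucc, Fin.snoc_last]
      have key : ∀ i, grid (fun i => β (s i) ω - s i * β 1 ω) 0 i + t i * β 1 ω = β (t i) ω := by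
        refine forall_fin_grid ?_ (fun i => ?_) ?_
        · simp [ht, hω]
        · simp [ht]
        · simp [ht]
      have h1 := key j.succ
      have h2 := key j.castSucc
      rw [← h1, ← h2]; ring
    rw [mem_preimage, hw, hemb.injective.mem_set_image]
    simp [hB]
  have hgm : Measurable fun ω (j : Fin (k + 1)) => β (t j.succ) ω - β (t j.castSucc) ω :=
    measurable_pi_lambda _ fun j => (hβ.meas _).sub (hβ.meas _)
  rw [measure_congr hset, ← Measure.map_apply hgm (hemb.measurableSet_image.2 hBm), hlaw,
    withDensity_apply _ (hemb.measurableSet_image.2 hBm),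
    ← (measurePreserving_incrMap s).setLIntegral_comp_emb hemb]
  simp only [prod_gaussianPDF_incrMap s hs, ht]

theorem setLIntegral_box_gaussianPDF {k : ℕ} (A : Fin k → Set ℝ) (hA : ∀ i, MeasurableSet (A i)) :
    ∫⁻ w : Fin (k + 1) → ℝ in {w | ∀ i : Fin k, w i.castSucc ∈ A i},
      gaussianPDF 0 1 (w (Fin.last k)) = ∏ i, volume (A i) := by
  have hm : MeasurableSet {w : Fin (k + 1) → ℝ | ∀ i : Fin k, w i.castSucc ∈ A i} := by
    rw [ofPred_forall]
    exact .iInter fun i => (measurable_pi_apply _) (hA i)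
  rw [← lintegral_indicator hm]
  let f : Fin (k + 1) → ℝ → ℝ≥0∞ :=
    Fin.snoc (α := fun _ => ℝ → ℝ≥0∞) (fun i => (A i).indicator 1) (gaussianPDF 0 1)
  have hf : ∀ i, Measurable (f i) := by
    refine Fin.lastCases ?_ fun i => ?_
    · simpa [f] using measurable_gaussianPDF 0 1
    · simpa [f] using (measurable_one.indicator (hA i))
  have h : ∀ w : Fin (k + 1) → ℝ, ({w | ∀ i : Fin k, w i.castSucc ∈ A i} : Set _).indicator
      (fun w => gaussianPDF 0 1 (w (Fin.last k))) w = ∏ i, f i (w i) := by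
    intro w
    rw [Fin.prod_univ_castSucc]
    simp only [f, Fin.snoc_castSucc, Fin.snoc_last]
    by_cases hw : ∀ i : Fin k, w i.castSucc ∈ A i
    · rw [indicator_of_mem (by exact hw), Finset.prod_eq_one fun i _ => by
        rw [indicator_of_mem (hw i), Pi.one_apply], one_mul]
    · rw [indicator_of_notMem (by exact hw)]
      push Not at hw
      obtain ⟨i, hi⟩ := hw
      rw [Finset.prod_eq_zero (Finset.mem_univ i) (indicator_of_notMem hi _), zero_mul]
  simp_rw [h, volume_pi]
  rw [lintegral_pi_fin_prod _ _ hf, Fin.prod_univ_castSucc]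
  simp only [f, Fin.snoc_castSucc, Fin.snoc_last]
  rw [lintegral_gaussianPDF_eq_one 0 one_ne_zero, mul_one]
  exact Finset.prod_congr rfl fun i _ => lintegral_indicator_one (hA i)

theorem bridgeEnergy_nonneg {k : ℕ} (s z : Fin k → ℝ) (hs : StrictMono (grid s 1)) :
    0 ≤ bridgeEnergy s z :=
  Finset.sum_nonneg fun _ _ => div_nonneg (sq_nonneg _)
    (mul_nonneg zero_le_two (sub_nonneg.2 (hs Fin.castSucc_lt_succ).le))

theorem bridge_box_le {Ω : Type} [MeasurableSpace Ω] {P : Measure Ω} {β : ℝ → Ω → ℝ}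
    (hβ : IsBrownianMotion P β) {k : ℕ} (s : Fin k → ℝ) (hs : StrictMono (grid s 1))
    (c : Fin k → ℝ) (ε : ℝ) :
    P {ω | ∀ i, β (s i) ω - s i * β 1 ω ∈ Icc (c i - ε) (c i + ε)} ≤
      ENNReal.ofReal (2 * ε) ^ k * ENNReal.ofReal (bridgeDensity s) := by
  rw [bridge_box_measure hβ s hs _ fun i => measurableSet_Icc]
  calc _ ≤ ∫⁻ w : Fin (k + 1) → ℝ in {w | ∀ i : Fin k, w i.castSucc ∈ Icc (c i - ε) (c i + ε)},
        ENNReal.ofReal (bridgeDensity s) * gaussianPDF 0 1 (w (Fin.last k)) := by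
        refine lintegral_mono fun w => ?_
        gcongr
        refine mul_le_of_le_one_right (bridgeDensity_nonneg s) (Real.exp_le_one_iff.2 ?_)
        exact neg_nonpos.2 (bridgeEnergy_nonneg _ _ hs)
    _ = _ := by
        rw [lintegral_const_mul' _ _ ENNReal.ofReal_ne_top,
          setLIntegral_box_gaussianPDF _ fun i => measurableSet_Icc, mul_comm]
        have hv : ∀ i, volume (Icc (c i - ε) (c i + ε)) = ENNReal.ofReal (2 * ε) := fun i => by
          rw [Real.volume_Icc]; congr 1; ring
        simp [hv]

theorem bridgeEnergy_le {k : ℕ} (s z : Fin k → ℝ) (hs : StrictMono (grid s 1)) {ε : ℝ}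
    (hε : 0 ≤ ε) (hz : ∀ i, z i ∈ Icc (0 - ε) (0 + ε)) :
    bridgeEnergy s z ≤
      ε ^ 2 * ∑ j : Fin (k + 1), 2 / (grid s 1 j.succ - grid s 1 j.castSucc) := by
  have hg : ∀ i, |grid z 0 i| ≤ ε := by
    refine forall_fin_grid ?_ (fun i => ?_) ?_
    · simpa
    · rw [grid_succ_castSucc, abs_le]
      have := hz i
      constructor <;> linarith [this.1, this.2]
    · simpa
  rw [bridgeEnergy, Finset.mul_sum]
  refine Finset.sum_le_sum fun j _ => ?_
  have hpos : 0 < grid s 1 j.succ - grid s 1 j.castSucc := sub_pos.2 (hs Fin.castSucc_lt_succ)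
  have h : (grid z 0 j.succ - grid z 0 j.castSucc) ^ 2 ≤ (2 * ε) ^ 2 := by
    refine sq_le_sq' ?_ ?_ <;> linarith [abs_le.1 (hg j.succ), abs_le.1 (hg j.castSucc),
      (abs_le.1 (hg j.succ)).1, (abs_le.1 (hg j.succ)).2, (abs_le.1 (hg j.castSucc)).1,
      (abs_le.1 (hg j.castSucc)).2]
  calc _ ≤ (2 * ε) ^ 2 / (2 * (grid s 1 j.succ - grid s 1 j.castSucc)) := by gcongr
    _ = _ := by field_simp

theorem le_bridge_box {Ω : Type} [MeasurableSpace Ω] {P : Measure Ω} {β : ℝ → Ω → ℝ}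
    (hβ : IsBrownianMotion P β) {k : ℕ} (s : Fin k → ℝ) (hs : StrictMono (grid s 1))
    {ε : ℝ} (hε : 0 ≤ ε) :
    ENNReal.ofReal (2 * ε) ^ k * ENNReal.ofReal (bridgeDensity s * Real.exp (-(ε ^ 2 *
        ∑ j : Fin (k + 1), 2 / (grid s 1 j.succ - grid s 1 j.castSucc)))) ≤
      P {ω | ∀ i, β (s i) ω - s i * β 1 ω ∈ Icc (0 - ε) (0 + ε)} := by
  have hm : MeasurableSet {w : Fin (k + 1) → ℝ | ∀ i : Fin k, w i.castSucc ∈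
      Icc (0 - ε) (0 + ε)} := by
    rw [ofPred_forall]
    exact .iInter fun i => (measurable_pi_apply _) measurableSet_Icc
  rw [bridge_box_measure hβ s hs _ fun i => measurableSet_Icc]
  calc _ = ∫⁻ w : Fin (k + 1) → ℝ in {w | ∀ i : Fin k, w i.castSucc ∈ Icc (0 - ε) (0 + ε)},
        ENNReal.ofReal (bridgeDensity s * Real.exp (-(ε ^ 2 *
        ∑ j : Fin (k + 1), 2 / (grid s 1 j.succ - grid s 1 j.castSucc)))) *
          gaussianPDF 0 1 (w (Fin.last k)) := by
        rw [lintegral_const_mul' _ _ ENNReal.ofReal_ne_top,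
          setLIntegral_box_gaussianPDF _ fun _ => measurableSet_Icc, mul_comm]
        have hv : volume (Icc (0 - ε) (0 + ε)) = ENNReal.ofReal (2 * ε) := by
          rw [Real.volume_Icc]; congr 1; ring
        simp only [hv, Finset.prod_const, Finset.card_univ, Fintype.card_fin]
    _ ≤ _ := by
        refine setLIntegral_mono' hm fun w hw => ?_
        gcongr
        · exact bridgeDensity_nonneg s
        · exact bridgeEnergy_le s _ hs hε hw

theorem setLIntegral_inv_sqrt_ne_top :
    ∫⁻ x in Iic (1 : ℝ), ENNReal.ofReal (√x)⁻¹ ≠ ∞ := by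
  have hi : IntegrableOn (fun x : ℝ => x ^ (-(1 / 2) : ℝ)) (Ioc 0 1) :=
    (intervalIntegrable_iff_integrableOn_Ioc_of_le zero_le_one).1
      (intervalIntegral.intervalIntegrable_rpow' (by norm_num))
  have h : ∫⁻ x in Iic (1 : ℝ), ENNReal.ofReal (√x)⁻¹ ≤
      ∫⁻ x in Ioc (0 : ℝ) 1, ENNReal.ofReal (x ^ (-(1 / 2) : ℝ)) := by
    rw [← lintegral_indicator measurableSet_Iic, ← lintegral_indicator measurableSet_Ioc]
    refine lintegral_mono fun x => ?_
    by_cases hx : 0 < x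
    · by_cases hx1 : x ≤ 1
      · rw [indicator_of_mem (by exact hx1), indicator_of_mem (by exact ⟨hx, hx1⟩),
          Real.rpow_neg hx.le, Real.sqrt_eq_rpow]
      · rw [indicator_of_notMem (by exact hx1)]; exact zero_le
    · refine le_trans (indicator_le_self _ _ _) ?_
      rw [Real.sqrt_eq_zero_of_nonpos (not_lt.1 hx)]
      simp
  exact ne_top_of_le_ne_top hi.lintegral_lt_top.ne h

theorem exists_lintegral_inv_sqrt_mul_le : ∃ C : ℝ≥0∞, C ≠ ∞ ∧ ∀ u : ℝ, u ≤ 1 →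
    ∫⁻ x, ENNReal.ofReal (√x)⁻¹ * ENNReal.ofReal (√(u - x))⁻¹ ≤ C * ENNReal.ofReal (√u)⁻¹ := by
  set r : ℝ → ℝ≥0∞ := fun x => ENNReal.ofReal (√x)⁻¹ with hr
  have hrm : Measurable r := by fun_prop
  have hr0 : ∀ x, x ≤ 0 → r x = 0 := fun x hx => by
    simp [hr, Real.sqrt_eq_zero_of_nonpos hx]
  have hanti : ∀ x y, 0 < x → x ≤ y → r y ≤ r x := fun x y hx hxy => by
    simp only [hr]; gcongr
  set D := ∫⁻ x in Iic (1 : ℝ), r x with hD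
  refine ⟨ENNReal.ofReal √2 * (2 * D), ENNReal.mul_ne_top ENNReal.ofReal_ne_top
    (ENNReal.mul_ne_top (by simp) setLIntegral_inv_sqrt_ne_top), fun u hu => ?_⟩
  have hpt : ∀ x, r x * r (u - x) ≤
      r (u / 2) * ((Iic 1).indicator r x + (Iic 1).indicator r (u - x)) := by
    intro x
    rcases le_or_gt x 0 with hx | hx
    · rw [hr0 x hx]; simp
    rcases le_or_gt (u - x) 0 with hx' | hx'
    · rw [hr0 _ hx']; simp
    rw [indicator_of_mem (by simp; linarith), indicator_of_mem (by simp; linarith), mul_add]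
    rcases le_total (u / 2) x with h | h
    · refine le_trans ?_ le_add_self
      gcongr
      exact hanti _ _ (by linarith) h
    · refine le_trans ?_ le_self_add
      rw [mul_comm]
      gcongr
      exact hanti _ _ (by linarith) (by linarith)
  have hu2 : r (u / 2) = ENNReal.ofReal √2 * r u := by
    simp only [hr]
    rw [← ENNReal.ofReal_mul (by positivity), Real.sqrt_div' _ zero_le_two, inv_div, div_eq_mul_inv]
  calc ∫⁻ x, r x * r (u - x) ≤ ∫⁻ x, r (u / 2) *
        ((Iic 1).indicator r x + (Iic 1).indicator r (u - x)) := lintegral_mono hpt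
    _ = r (u / 2) * (2 * D) := by
        rw [lintegral_const_mul' _ _ ENNReal.ofReal_ne_top,
          lintegral_add_left (hrm.indicator measurableSet_Iic),
          lintegral_sub_left_eq_self (fun x => (Iic 1).indicator r x) u,
          lintegral_indicator measurableSet_Iic, two_mul]
    _ = _ := by rw [hu2]; ring

theorem grid_snoc_castSucc {k : ℕ} (s : Fin k → ℝ) (x u : ℝ) (i : Fin (k + 2)) :
    grid (Fin.snoc (α := fun _ => ℝ) s x) u i.castSucc = grid s x i := by
  refine Fin.cases ?_ (fun j => ?_) i
  · simp
  · rw [← Fin.succ_castSucc, grid_succ_castSucc]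
    simp [grid]

theorem exists_lintegral_prod_inv_sqrt_le (k : ℕ) : ∃ C : ℝ≥0∞, C ≠ ∞ ∧ ∀ u : ℝ, u ≤ 1 →
    ∫⁻ s : Fin k → ℝ, ∏ j : Fin (k + 1),
      ENNReal.ofReal (√(grid s u j.succ - grid s u j.castSucc))⁻¹ ≤
        C * ENNReal.ofReal (√u)⁻¹ := by
  induction k with
  | zero =>
    refine ⟨1, ENNReal.one_ne_top, fun u _ => ?_⟩
    have h : (volume : Measure (Fin 0 → ℝ)) univ = 1 := by
      rw [volume_pi, Measure.pi_univ]; simp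
    simp [grid, Fin.snoc, h]
  | succ k ih =>
    obtain ⟨C, hC, h⟩ := ih
    obtain ⟨C', hC', h'⟩ := exists_lintegral_inv_sqrt_mul_le
    refine ⟨C * C', ENNReal.mul_ne_top hC hC', fun u hu => ?_⟩
    rw [← (volume_preserving_piFinSuccAbove (fun _ : Fin (k + 1) => ℝ)
      (Fin.last k)).symm.lintegral_comp_emb (MeasurableEquiv.measurableEmbedding _)]
    have hprod : ∀ p : ℝ × (Fin k → ℝ), (∏ j : Fin (k + 2), ENNReal.ofReal
        (√(grid ((MeasurableEquiv.piFinSuccAbove (fun _ : Fin (k + 1) => ℝ)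
          (Fin.last k)).symm p) u j.succ - grid ((MeasurableEquiv.piFinSuccAbove
            (fun _ : Fin (k + 1) => ℝ) (Fin.last k)).symm p) u j.castSucc))⁻¹) =
        (∏ j : Fin (k + 1), ENNReal.ofReal (√(grid p.2 p.1 j.succ - grid p.2 p.1 j.castSucc))⁻¹) *
          ENNReal.ofReal (√(u - p.1))⁻¹ := by
      intro p
      have hp : (MeasurableEquiv.piFinSuccAbove (fun _ : Fin (k + 1) => ℝ)
          (Fin.last k)).symm p = Fin.snoc (α := fun _ => ℝ) p.2 p.1 := by
        simp [MeasurableEquiv.piFinSuccAbove_symm_apply, Fin.insertNthEquiv, Fin.insertNth_last']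
      rw [hp, Fin.prod_univ_castSucc]
      simp only [Fin.succ_castSucc, grid_snoc_castSucc, Fin.succ_last, grid_last]
    simp_rw [hprod]
    have hgm : ∀ i, Measurable fun p : ℝ × (Fin k → ℝ) => grid p.2 p.1 i := by
      refine forall_fin_grid ?_ (fun i => ?_) ?_
      · simp
      · simp only [grid_succ_castSucc]; fun_prop
      · simp only [grid_last]; fun_prop
    rw [Measure.volume_eq_prod, lintegral_prod]
    · calc _ ≤ ∫⁻ x, C * (ENNReal.ofReal (√x)⁻¹ * ENNReal.ofReal (√(u - x))⁻¹) := by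
            refine lintegral_mono fun x => ?_
            dsimp only
            rw [lintegral_mul_const' _ _ ENNReal.ofReal_ne_top, ← mul_assoc]
            rcases le_or_gt x 1 with hx | hx
            · gcongr
              exact h x hx
            · rw [Real.sqrt_eq_zero_of_nonpos (by linarith : u - x ≤ 0)]
              simp
        _ ≤ _ := by
            rw [lintegral_const_mul' _ _ hC, mul_assoc]
            gcongr
            exact h' u hu
    · exact ((Finset.measurable_prod _ fun j _ => ((((hgm _).sub (hgm _)).sqrt).inv.ennreal_ofReal)).mul
        (by fun_prop)).aemeasurable

theorem lintegral_bridgeDensity_ne_top (k : ℕ) :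
    ∫⁻ s : Fin k → ℝ, ENNReal.ofReal (bridgeDensity s) ≠ ∞ := by
  obtain ⟨C, hC, h⟩ := exists_lintegral_prod_inv_sqrt_le k
  have heq : ∀ s : Fin k → ℝ, ENNReal.ofReal (bridgeDensity s) =
      ENNReal.ofReal (√(2 * Real.pi) * (√(2 * Real.pi))⁻¹ ^ (k + 1)) * ∏ j : Fin (k + 1),
      ENNReal.ofReal (√(grid s 1 j.succ - grid s 1 j.castSucc))⁻¹ := by
    intro s
    rw [← ENNReal.ofReal_prod_of_nonneg fun j _ => by positivity,
      ← ENNReal.ofReal_mul (by positivity), bridgeDensity]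
    simp_rw [Real.sqrt_mul (by positivity : (0 : ℝ) ≤ 2 * Real.pi), mul_inv,
      Finset.prod_mul_distrib]
    simp [mul_assoc]
  simp_rw [heq]
  rw [lintegral_const_mul' _ _ ENNReal.ofReal_ne_top]
  refine ENNReal.mul_ne_top ENNReal.ofReal_ne_top (ne_top_of_le_ne_top ?_ (h 1 le_rfl))
  exact ENNReal.mul_ne_top hC ENNReal.ofReal_ne_top

theorem strictMono_grid_iff {k : ℕ} (s : Fin k → ℝ) :
    StrictMono (grid s 1) ↔ StrictMono s ∧ ∀ i, s i ∈ Ioo (0 : ℝ) 1 := by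
  constructor
  · intro h
    refine ⟨fun i j hij => ?_, fun i => ⟨?_, ?_⟩⟩
    · have := h (a := i.castSucc.succ) (b := j.castSucc.succ) (by simpa using hij)
      simpa using this
    · have := h (Fin.succ_pos i.castSucc)
      simpa using this
    · have := h (a := i.castSucc.succ) (b := Fin.last (k + 1))
        (by rw [← Fin.succ_last, Fin.succ_lt_succ_iff]; exact Fin.castSucc_lt_last i)
      simpa using this
  · rintro ⟨h, h01⟩ i j
    revert i j
    refine forall_fin_grid (fun j => ?_) (fun i => ?_) (fun j hj => ?_)
    · revert j
      refine forall_fin_grid ?_ (fun j => ?_) ?_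
      · simp
      · simpa using (h01 j).1
      · simp
    · refine forall_fin_grid ?_ (fun j => ?_) ?_
      · simp
      · intro hij
        simpa using h (by simpa using hij)
      · intro _
        simpa using (h01 i).2
    · exact absurd hj (Fin.le_last j).not_gt

theorem measurable_grid {k : ℕ} (u : ℝ) (i : Fin (k + 2)) :
    Measurable fun s : Fin k → ℝ => grid s u i := by
  revert i
  refine forall_fin_grid ?_ (fun i => ?_) ?_
  · simp
  · simp only [grid_succ_castSucc]; fun_prop
  · simp

theorem measurable_bridgeDensity {k : ℕ} : Measurable (bridgeDensity (k := k)) := by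
  unfold bridgeDensity
  exact measurable_const.mul (Finset.measurable_prod _ fun j _ =>
    ((measurable_const.mul ((measurable_grid 1 _).sub (measurable_grid 1 _))).sqrt).inv)

theorem measurableSet_strictMono_grid (k : ℕ) :
    MeasurableSet {s : Fin k → ℝ | StrictMono (grid s 1)} := by
  have h : {s : Fin k → ℝ | StrictMono (grid s 1)} =
      (fun s => grid s 1) ⁻¹' {t | StrictMono t} := rfl
  rw [h]
  exact (measurable_pi_lambda _ fun i => measurable_grid 1 i) (measurableSet_strictMono_fin _)

/-- The moments of the occupation time of `I` up to time `1`. -/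
theorem lintegral_occupation_pow {Ω : Type} [MeasurableSpace Ω] (P : Measure Ω)
    [IsProbabilityMeasure P] (X : ℝ → Ω → ℝ) (hX : Measurable (Function.uncurry X))
    (I : Set ℝ) (hI : MeasurableSet I) (k : ℕ) :
    ∫⁻ ω, (∫⁻ r in Icc (0 : ℝ) 1, I.indicator 1 (X r ω)) ^ k ∂P =
      ∫⁻ s : Fin k → ℝ in {s | StrictMono (grid s 1)},
        (k.factorial : ℝ≥0∞) * P {ω | ∀ i, X (s i) ω ∈ I} := by
  let g : ℝ → Ω → ℝ≥0∞ := fun r ω => (Ioo (0 : ℝ) 1).indicator 1 r * I.indicator 1 (X r ω)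
  have hg : Measurable (Function.uncurry g) :=
    ((measurable_one.indicator measurableSet_Ioo).comp measurable_fst).mul
      ((measurable_one.indicator hI).comp hX)
  have hgr : ∀ ω, Measurable fun r => g r ω := fun ω => hg.comp measurable_prodMk_right
  have hpow : ∀ ω, (∫⁻ r in Icc (0 : ℝ) 1, I.indicator 1 (X r ω)) ^ k =
      ∫⁻ s : Fin k → ℝ, ∏ i, g (s i) ω := by
    intro ω
    rw [volume_pi, lintegral_pi_fin_prod _ (fun _ r => g r ω) fun _ => hgr ω, Finset.prod_const,
      Finset.card_univ, Fintype.card_fin, setLIntegral_congr Ioo_ae_eq_Icc.symm,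
      ← lintegral_indicator measurableSet_Ioo]
    congr 2 with r
    by_cases hr : r ∈ Ioo (0 : ℝ) 1 <;> simp [g, hr]
  have hprodm : Measurable fun p : (Fin k → ℝ) × Ω => ∏ i, g (p.1 i) p.2 := by
    refine Finset.measurable_prod _ fun i _ => ?_
    have hm : Measurable fun p : (Fin k → ℝ) × Ω => (p.1 i, p.2) := by fun_prop
    exact hg.comp hm
  simp_rw [hpow]
  rw [lintegral_lintegral_swap (by exact (hprodm.comp measurable_swap).aemeasurable),
    lintegral_symm_eq_factorial (fun s : Fin k → ℝ => ∫⁻ ω, ∏ i, g (s i) ω ∂P)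
      (by exact hprodm.lintegral_prod_right') fun σ s => by
        refine lintegral_congr fun ω => ?_
        exact Equiv.prod_comp σ fun i => g (s i) ω,
    ← lintegral_const_mul' _ _ (ENNReal.natCast_ne_top _),
    ← lintegral_indicator (measurableSet_strictMono_fin k),
    ← lintegral_indicator (measurableSet_strictMono_grid k)]
  refine lintegral_congr fun s => ?_
  by_cases h1 : StrictMono s
  swap
  · rw [indicator_of_notMem (by exact h1), indicator_of_notMem]
    exact fun h => h1 ((strictMono_grid_iff s).1 h).1
  by_cases h2 : ∀ i, s i ∈ Ioo (0 : ℝ) 1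
  · rw [indicator_of_mem (by exact h1), indicator_of_mem (by exact (strictMono_grid_iff s).2 ⟨h1, h2⟩)]
    congr 1
    have hm : MeasurableSet {ω | ∀ i, X (s i) ω ∈ I} := by
      rw [ofPred_forall]
      exact .iInter fun i => (hX.comp (measurable_const.prodMk measurable_id)) hI
    rw [← lintegral_indicator_one hm]
    refine lintegral_congr fun ω => ?_
    by_cases hω : ∀ i, X (s i) ω ∈ I
    · rw [indicator_of_mem (by exact hω)]
      exact Finset.prod_eq_one fun i _ => by simp [g, h2 i, hω i]
    · rw [indicator_of_notMem (by exact hω)]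
      push Not at hω
      obtain ⟨i, hi⟩ := hω
      exact Finset.prod_eq_zero (Finset.mem_univ i) (by simp [g, hi])
  · rw [indicator_of_mem (by exact h1), indicator_of_notMem
      (fun h => h2 ((strictMono_grid_iff s).1 h).2)]
    push Not at h2
    obtain ⟨i, hi⟩ := h2
    have : ∀ ω, ∏ i, g (s i) ω = 0 := fun ω =>
      Finset.prod_eq_zero (Finset.mem_univ i) (by simp only [g]; rw [indicator_of_notMem hi, zero_mul])
    simp [this]

theorem tendsto_setLIntegral_Icc_div (g : ℝ → ℝ≥0∞) (hg : Continuous g) (a : ℝ) (ε : ℕ → ℝ)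
    (hε : ∀ n, 0 < ε n) (hlim : Filter.Tendsto ε Filter.atTop (nhds 0)) :
    Filter.Tendsto (fun n => (∫⁻ t in Icc (a - ε n) (a + ε n), g t) / ENNReal.ofReal (2 * ε n))
      Filter.atTop (nhds (g a)) := by
  have hvol : ∀ n, volume (Icc (a - ε n) (a + ε n)) = ENNReal.ofReal (2 * ε n) := fun n => by
    rw [Real.volume_Icc]; congr 1; ring
  have hne : ∀ n, ENNReal.ofReal (2 * ε n) ≠ 0 := fun n => by
    simpa using hε n
  have hnear : ∀ U ∈ nhds a, ∀ᶠ n in Filter.atTop, Icc (a - ε n) (a + ε n) ⊆ U := by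
    intro U hU
    obtain ⟨δ, hδ, h⟩ := Metric.mem_nhds_iff.1 hU
    filter_upwards [hlim.eventually_lt_const hδ] with n hn
    refine subset_trans (fun t ht => ?_) h
    rw [Metric.mem_ball, Real.dist_eq, abs_lt]
    constructor <;> linarith [ht.1, ht.2]
  refine tendsto_order.2 ⟨fun b hb => ?_, fun b hb => ?_⟩
  · obtain ⟨b', hb', hb''⟩ := exists_between hb
    filter_upwards [hnear _ (hg.continuousAt.eventually_const_lt hb'')] with n hn
    refine hb'.trans_le ?_
    rw [ENNReal.le_div_iff_mul_le (.inl (hne n)) (.inl ENNReal.ofReal_ne_top), ← hvol,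
      ← setLIntegral_const]
    exact setLIntegral_mono' measurableSet_Icc fun t ht => le_of_lt (hn ht)
  · obtain ⟨b', hb', hb''⟩ := exists_between hb
    filter_upwards [hnear _ (hg.continuousAt.eventually_lt_const hb')] with n hn
    refine lt_of_le_of_lt ?_ hb''
    rw [ENNReal.div_le_iff_le_mul (.inl (hne n)) (.inl ENNReal.ofReal_ne_top), ← hvol,
      ← setLIntegral_const]
    exact setLIntegral_mono' measurableSet_Icc fun t ht => le_of_lt (hn ht)

theorem lintegral_pow_le_of_tendsto {Ω : Type} [MeasurableSpace Ω] {P : Measure Ω}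
    {Z : ℕ → Ω → ℝ≥0∞} {W : Ω → ℝ≥0∞} (hZ : ∀ n, Measurable (Z n))
    (hlim : ∀ᵐ ω ∂P, Filter.Tendsto (fun n => Z n ω) Filter.atTop (nhds (W ω))) (k : ℕ) {G : ℝ≥0∞}
    (hG : ∀ n, ∫⁻ ω, Z n ω ^ k ∂P ≤ G) : ∫⁻ ω, W ω ^ k ∂P ≤ G := by
  have h : ∀ᵐ ω ∂P, W ω ^ k = Filter.liminf (fun n => Z n ω ^ k) Filter.atTop := by
    filter_upwards [hlim] with ω hω
    exact (((ENNReal.continuous_pow k).tendsto _).comp hω).liminf_eq.symm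
  rw [lintegral_congr_ae h]
  refine (lintegral_liminf_le fun n => (hZ n).pow_const k).trans ?_
  exact Filter.liminf_le_of_le (by isBoundedDefault) fun b hb =>
    let ⟨n, hn⟩ := hb.exists
    hn.trans (hG n)

theorem le_lintegral_pow_of_tendsto {Ω : Type} [MeasurableSpace Ω] {P : Measure Ω}
    [IsProbabilityMeasure P]
    {Z : ℕ → Ω → ℝ≥0∞} {W : Ω → ℝ≥0∞} (hZ : ∀ n, Measurable (Z n))
    (hlim : ∀ᵐ ω ∂P, Filter.Tendsto (fun n => Z n ω) Filter.atTop (nhds (W ω))) (k : ℕ)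
    {G G' : ℝ≥0∞} (hG' : G' ≠ ∞) (hbd : ∀ n, ∫⁻ ω, Z n ω ^ (k + 1) ∂P ≤ G')
    (hG : G ≤ Filter.liminf (fun n => ∫⁻ ω, Z n ω ^ k ∂P) Filter.atTop) :
    G ≤ ∫⁻ ω, W ω ^ k ∂P := by
  have hpt : ∀ (N : ℕ) (z : ℝ≥0∞), z ^ k ≤ min z (N + 1) ^ k + z ^ (k + 1) / (N + 1) := by
    intro N z
    have hN : (N + 1 : ℝ≥0∞) ≠ ∞ := by finiteness
    rcases le_total z (N + 1) with h | h
    · rw [min_eq_left h]; exact le_self_add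
    · refine le_trans ?_ le_add_self
      rw [ENNReal.le_div_iff_mul_le (.inl (by simp)) (.inl hN), pow_succ]
      gcongr
  have hN : ∀ N : ℕ, G ≤ ∫⁻ ω, W ω ^ k ∂P + G' / (N + 1) := by
    intro N
    have hN' : (N + 1 : ℝ≥0∞) ≠ ∞ := by finiteness
    have hdom : Filter.Tendsto (fun n => ∫⁻ ω, min (Z n ω) (N + 1) ^ k ∂P) Filter.atTop
        (nhds (∫⁻ ω, min (W ω) (N + 1) ^ k ∂P)) := by
      refine tendsto_lintegral_of_dominated_convergence (fun _ => (N + 1 : ℝ≥0∞) ^ k)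
        (fun n => ((hZ n).min measurable_const).pow_const k)
        (fun n => Filter.Eventually.of_forall fun ω => by dsimp only; gcongr; exact min_le_right _ _)
        (by simp) ?_
      filter_upwards [hlim] with ω hω
      exact ((ENNReal.continuous_pow k).tendsto _).comp (hω.min tendsto_const_nhds)
    have hsum := hdom.add_const (G' / (N + 1))
    calc G ≤ Filter.liminf (fun n => ∫⁻ ω, Z n ω ^ k ∂P) Filter.atTop := hG
      _ ≤ Filter.liminf (fun n => ∫⁻ ω, min (Z n ω) (N + 1) ^ k ∂P + G' / (N + 1))
          Filter.atTop := by
          refine Filter.liminf_le_liminf (Filter.Eventually.of_forall fun n => ?_)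
          refine (lintegral_mono fun ω => hpt N (Z n ω)).trans ?_
          rw [lintegral_add_left (((hZ n).min measurable_const).pow_const k)]
          gcongr
          simp_rw [div_eq_mul_inv]
          rw [lintegral_mul_const _ ((hZ n).pow_const _)]
          gcongr
          exact hbd n
      _ = ∫⁻ ω, min (W ω) (N + 1) ^ k ∂P + G' / (N + 1) := hsum.liminf_eq
      _ ≤ _ := by
          gcongr
          exact min_le_left _ _
  have hlimN : Filter.Tendsto (fun N : ℕ => ∫⁻ ω, W ω ^ k ∂P + G' / (N + 1)) Filter.atTop
      (nhds (∫⁻ ω, W ω ^ k ∂P + 0)) := by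
    refine Filter.Tendsto.const_add _ ?_
    have h := (ENNReal.tendsto_inv_nat_nhds_zero.comp (Filter.tendsto_add_atTop_nat 1))
    have := ENNReal.Tendsto.const_mul (a := G') h (.inr hG')
    simpa [div_eq_mul_inv, Function.comp_def] using this
  rw [add_zero] at hlimN
  exact ge_of_tendsto' hlimN hN

theorem IsBrownianMotion.exists_continuous_modification {Ω : Type} [MeasurableSpace Ω]
    {P : Measure Ω} {β : ℝ → Ω → ℝ} (hβ : IsBrownianMotion P β) :
    ∃ β' : ℝ → Ω → ℝ, IsBrownianMotion P β' ∧ (∀ ω, Continuous fun t => β' t ω) ∧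
      ∀ᵐ ω ∂P, ∀ t, β' t ω = β t ω := by
  classical
  set N := toMeasurable P {ω | ¬Continuous fun t => β t ω} with hN
  have hN0 : P N = 0 := by rw [hN, measure_toMeasurable]; exact hβ.cont
  have hNm : MeasurableSet N := measurableSet_toMeasurable _ _
  let β' : ℝ → Ω → ℝ := fun t ω => if ω ∈ N then 0 else β t ω
  have hc : ∀ ω, Continuous fun t => β' t ω := by
    intro ω
    by_cases h : ω ∈ N
    · simp only [β', h, if_true]; exact continuous_const
    · simp only [β', h, if_false]
      by_contra hcon
      exact h (subset_toMeasurable P _ hcon)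
  have hae : ∀ᵐ ω ∂P, ∀ t, β' t ω = β t ω := by
    filter_upwards [compl_mem_ae_iff.2 hN0] with ω hω t
    exact if_neg hω
  refine ⟨β', ⟨hβ.isProb, fun s => Measurable.ite hNm measurable_const (hβ.meas s), ?_,
    Filter.Eventually.of_forall hc, fun s t hs hst => ?_, fun n t ht h0 => ?_⟩, hc, hae⟩
  · filter_upwards [hae, hβ.start] with ω h1 h2
    rw [h1, h2]
  · rw [← hβ.incr s t hs hst]
    refine Measure.map_congr ?_
    filter_upwards [hae] with ω h
    rw [h, h]
  · refine (iIndepFun_congr fun i => ?_).1 (hβ.indep n t ht h0)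
    filter_upwards [hae] with ω h
    simp only [h]

/-- The value at time `t` of the bridge from `0` to `y` built from `β`. -/
def bridge {Ω : Type} (β : ℝ → Ω → ℝ) (y t : ℝ) (ω : Ω) : ℝ := β t ω - t * β 1 ω + t * y

/-- The normalized occupation time up to time `1` of the interval of radius `1 / (n + 1)` around
`a`. -/
def normOccupation {Ω : Type} (X : ℝ → Ω → ℝ) (a : ℝ) (n : ℕ) (ω : Ω) : ℝ≥0∞ :=
  (∫⁻ r in Icc (0 : ℝ) 1, (Icc (a - 1 / ((n : ℝ) + 1)) (a + 1 / ((n : ℝ) + 1))).indicator 1 (X r ω))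
    / ENNReal.ofReal (2 * (1 / ((n : ℝ) + 1)))

theorem measurable_normOccupation {Ω : Type} [MeasurableSpace Ω] {X : ℝ → Ω → ℝ}
    (hX : Measurable (Function.uncurry X)) (a : ℝ) (n : ℕ) :
    Measurable (normOccupation X a n) := by
  have h : Measurable fun p : Ω × ℝ =>
      (Icc (a - 1 / ((n : ℝ) + 1)) (a + 1 / ((n : ℝ) + 1))).indicator (1 : ℝ → ℝ≥0∞) (X p.2 p.1) :=
    (measurable_one.indicator measurableSet_Icc).comp (hX.comp measurable_swap)
  exact h.lintegral_prod_right'.div_const _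

theorem measurable_uncurry_bridge {Ω : Type} [MeasurableSpace Ω] {P : Measure Ω}
    {β : ℝ → Ω → ℝ} (hβ : IsBrownianMotion P β) (hc : ∀ ω, Continuous fun t => β t ω) (y : ℝ) :
    Measurable (Function.uncurry (bridge β y)) := by
  refine measurable_uncurry_of_continuous_of_measurable (fun ω => ?_) fun t => ?_
  · unfold bridge
    exact ((hc ω).sub (continuous_id.mul continuous_const)).add (continuous_id.mul continuous_const)
  · unfold bridge
    exact ((hβ.meas t).sub ((hβ.meas 1).const_mul t)).add_const _

theorem lintegral_normOccupation_pow {Ω : Type} [MeasurableSpace Ω] (P : Measure Ω)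
    [IsProbabilityMeasure P] {X : ℝ → Ω → ℝ} (hX : Measurable (Function.uncurry X))
    (a : ℝ) (n k : ℕ) :
    ∫⁻ ω, normOccupation X a n ω ^ k ∂P =
      ∫⁻ s : Fin k → ℝ in {s | StrictMono (grid s 1)}, (k.factorial : ℝ≥0∞) *
        (P {ω | ∀ i, X (s i) ω ∈ Icc (a - 1 / ((n : ℝ) + 1)) (a + 1 / ((n : ℝ) + 1))} /
          ENNReal.ofReal (2 * (1 / ((n : ℝ) + 1))) ^ k) := by
  have hne : ENNReal.ofReal (2 * (1 / ((n : ℝ) + 1))) ^ k ≠ 0 :=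
    pow_ne_zero _ (by simp; positivity)
  unfold normOccupation
  generalize 1 / ((n : ℝ) + 1) = ε at *
  simp_rw [div_eq_mul_inv, mul_pow, ← ENNReal.inv_pow, ← mul_assoc]
  rw [lintegral_mul_const' _ _ (ENNReal.inv_ne_top.2 hne),
    lintegral_mul_const' _ _ (ENNReal.inv_ne_top.2 hne),
    lintegral_occupation_pow P X hX _ measurableSet_Icc k]

/-- The `k`-th moment of the local time at `0` of the standard Brownian bridge. -/
def bridgeMoment (k : ℕ) : ℝ≥0∞ :=
  ∫⁻ s : Fin k → ℝ in {s | StrictMono (grid s 1)},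
    (k.factorial : ℝ≥0∞) * ENNReal.ofReal (bridgeDensity s)

theorem bridgeMoment_ne_top (k : ℕ) : bridgeMoment k ≠ ∞ := by
  rw [bridgeMoment, lintegral_const_mul' _ _ (ENNReal.natCast_ne_top _)]
  exact ENNReal.mul_ne_top (ENNReal.natCast_ne_top _)
    (ne_top_of_le_ne_top (lintegral_bridgeDensity_ne_top k) (setLIntegral_le_lintegral _ _))

theorem lintegral_normOccupation_bridge_pow_le {Ω : Type} [MeasurableSpace Ω] {P : Measure Ω}
    {β : ℝ → Ω → ℝ} (hβ : IsBrownianMotion P β) (hc : ∀ ω, Continuous fun t => β t ω)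
    (y a : ℝ) (n k : ℕ) :
    ∫⁻ ω, normOccupation (bridge β y) a n ω ^ k ∂P ≤ bridgeMoment k := by
  have := hβ.isProb
  rw [lintegral_normOccupation_pow P (measurable_uncurry_bridge hβ hc y)]
  refine setLIntegral_mono' (measurableSet_strictMono_grid k) fun s hs => ?_
  gcongr
  refine ENNReal.div_le_of_le_mul' ?_
  refine le_trans (measure_mono ?_) (bridge_box_le hβ s hs (fun i => a - s i * y) _)
  intro ω hω i
  have := hω i
  simp only [bridge, mem_Icc] at this ⊢
  constructor <;> linarith [this.1, this.2]

theorem bridgeMoment_le_liminf {Ω : Type} [MeasurableSpace Ω] {P : Measure Ω}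
    {β : ℝ → Ω → ℝ} (hβ : IsBrownianMotion P β) (hc : ∀ ω, Continuous fun t => β t ω) (k : ℕ) :
    bridgeMoment k ≤
      Filter.liminf (fun n => ∫⁻ ω, normOccupation (bridge β 0) 0 n ω ^ k ∂P) Filter.atTop := by
  have := hβ.isProb
  let M : (Fin k → ℝ) → ℝ := fun s =>
    ∑ j : Fin (k + 1), 2 / (grid s 1 j.succ - grid s 1 j.castSucc)
  have hM : Measurable M := Finset.measurable_sum _ fun j _ =>
    measurable_const.div ((measurable_grid 1 _).sub (measurable_grid 1 _))
  let f : ℕ → (Fin k → ℝ) → ℝ≥0∞ := fun n s => (k.factorial : ℝ≥0∞) *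
    ENNReal.ofReal (bridgeDensity s * Real.exp (-((1 / ((n : ℝ) + 1)) ^ 2 * M s)))
  have hf : ∀ n, Measurable (f n) := fun n => (measurable_bridgeDensity.mul
    (hM.const_mul _).neg.exp).ennreal_ofReal.const_mul _
  have hlim : ∀ s, Filter.liminf (fun n => f n s) Filter.atTop =
      (k.factorial : ℝ≥0∞) * ENNReal.ofReal (bridgeDensity s) := by
    intro s
    refine Filter.Tendsto.liminf_eq ?_
    refine ENNReal.Tendsto.const_mul ?_ (.inr (ENNReal.natCast_ne_top _))
    refine ENNReal.tendsto_ofReal ?_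
    have h1 := (tendsto_one_div_add_atTop_nhds_zero_nat (𝕜 := ℝ)).pow 2
    have h2 := ((Real.continuous_exp.tendsto _).comp (h1.mul_const (M s)).neg).const_mul
      (bridgeDensity s)
    simpa [Function.comp_def] using h2
  calc bridgeMoment k = ∫⁻ s : Fin k → ℝ in {s | StrictMono (grid s 1)},
        Filter.liminf (fun n => f n s) Filter.atTop := by simp_rw [hlim]; rfl
    _ ≤ Filter.liminf (fun n => ∫⁻ s : Fin k → ℝ in {s | StrictMono (grid s 1)}, f n s)
        Filter.atTop := lintegral_liminf_le hf
    _ ≤ _ := by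
        refine Filter.liminf_le_liminf (Filter.Eventually.of_forall fun n => ?_)
        rw [lintegral_normOccupation_pow P (measurable_uncurry_bridge hβ hc 0)]
        refine setLIntegral_mono' (measurableSet_strictMono_grid k) fun s hs => ?_
        simp only [f]
        gcongr
        rw [ENNReal.le_div_iff_mul_le (.inl (pow_ne_zero _ (by simp; positivity)))
          (.inl (by finiteness)), mul_comm]
        simpa [bridge] using le_bridge_box hβ s hs (by positivity : 0 ≤ 1 / ((n : ℝ) + 1))

theorem IsLocalTimeField.tendsto_normOccupation {Ω : Type} [MeasurableSpace Ω] {P : Measure Ω}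
    {H X : ℝ → Ω → ℝ} {L : ℝ → ℝ → Ω → ℝ} (hL : IsLocalTimeField P H L)
    (hX : ∀ᵐ ω ∂P, ∀ t, X t ω = H t ω) (a : ℝ) :
    ∀ᵐ ω ∂P, Filter.Tendsto (fun n => normOccupation X a n ω) Filter.atTop
      (nhds (ENNReal.ofReal (L 1 a ω))) := by
  filter_upwards [hX, hL.cont, hL.occupation] with ω h1 h2 h3
  have hcont : Continuous fun t => ENNReal.ofReal (L 1 t ω) :=
    ENNReal.continuous_ofReal.comp (h2.comp (Continuous.prodMk_right 1))
  have h := tendsto_setLIntegral_Icc_div _ hcont a (fun n : ℕ => 1 / ((n : ℝ) + 1))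
    (fun n => by positivity) tendsto_one_div_add_atTop_nhds_zero_nat
  refine h.congr fun n => ?_
  rw [normOccupation]
  congr 1
  simp_rw [h1]
  rw [h3 1 zero_le_one _ (measurable_one.indicator measurableSet_Icc),
    ← lintegral_indicator measurableSet_Icc]
  refine lintegral_congr fun t => ?_
  by_cases ht : t ∈ Icc (a - 1 / ((n : ℝ) + 1)) (a + 1 / ((n : ℝ) + 1))
  · rw [indicator_of_mem ht, indicator_of_mem ht, Pi.one_apply, one_mul]
  · rw [indicator_of_notMem ht, indicator_of_notMem ht, zero_mul]

theorem lintegral_bridge_localTime_pow_le {Ω : Type} [MeasurableSpace Ω] {P : Measure Ω}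
    {β : ℝ → Ω → ℝ} (hβ : IsBrownianMotion P β) (y : ℝ) {K : ℝ → ℝ → Ω → ℝ}
    (hK : IsLocalTimeField P (fun t ω => β t ω - t * β 1 ω + t * y) K) (a : ℝ) (k : ℕ) :
    ∫⁻ ω, ENNReal.ofReal (K 1 a ω) ^ k ∂P ≤ bridgeMoment k := by
  obtain ⟨β', hβ', hc, hae⟩ := hβ.exists_continuous_modification
  refine lintegral_pow_le_of_tendsto
    (fun n => measurable_normOccupation (measurable_uncurry_bridge hβ' hc y) a n)
    (hK.tendsto_normOccupation ?_ a) k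
    fun n => lintegral_normOccupation_bridge_pow_le hβ' hc y a n k
  filter_upwards [hae] with ω h t
  simp only [bridge, h]

theorem bridgeMoment_le_lintegral_localTime_pow {Ω : Type} [MeasurableSpace Ω] {P : Measure Ω}
    {β : ℝ → Ω → ℝ} (hβ : IsBrownianMotion P β) {K : ℝ → ℝ → Ω → ℝ}
    (hK : IsLocalTimeField P (fun t ω => β t ω - t * β 1 ω) K) (k : ℕ) :
    bridgeMoment k ≤ ∫⁻ ω, ENNReal.ofReal (K 1 0 ω) ^ k ∂P := by
  have := hβ.isProb
  obtain ⟨β', hβ', hc, hae⟩ := hβ.exists_continuous_modification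
  refine le_lintegral_pow_of_tendsto
    (fun n => measurable_normOccupation (measurable_uncurry_bridge hβ' hc 0) 0 n)
    (hK.tendsto_normOccupation ?_ 0) k (bridgeMoment_ne_top (k + 1))
    (fun n => lintegral_normOccupation_bridge_pow_le hβ' hc 0 0 n (k + 1))
    (bridgeMoment_le_liminf hβ' hc k)
  filter_upwards [hae] with ω h t
  simp only [bridge, h, mul_zero, add_zero]

theorem lintegral_exp_sq_eq_tsum {Ω : Type} [MeasurableSpace Ω] (P : Measure Ω) {f : Ω → ℝ}
    (hf : Measurable f) (h0 : ∀ ω, 0 ≤ f ω) {c : ℝ} (hc : 0 ≤ c) :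
    ∫⁻ ω, ENNReal.ofReal (Real.exp (c * f ω ^ 2)) ∂P =
      ∑' n : ℕ, ENNReal.ofReal (c ^ n / n.factorial) *
        ∫⁻ ω, ENNReal.ofReal (f ω) ^ (2 * n) ∂P := by
  have h : ∀ ω, ENNReal.ofReal (Real.exp (c * f ω ^ 2)) =
      ∑' n : ℕ, ENNReal.ofReal (c ^ n / n.factorial) * ENNReal.ofReal (f ω) ^ (2 * n) := by
    intro ω
    have hsum := NormedSpace.expSeries_div_hasSum_exp (c * f ω ^ 2)
    rw [← Real.exp_eq_exp_ℝ] at hsum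
    rw [← hsum.tsum_eq, ENNReal.ofReal_tsum_of_nonneg
      (fun n => by have := h0 ω; positivity) hsum.summable]
    refine tsum_congr fun n => ?_
    rw [← ENNReal.ofReal_pow (h0 ω), ← ENNReal.ofReal_mul (by positivity)]
    congr 1
    rw [mul_pow, pow_mul]; ring
  simp_rw [h]
  rw [lintegral_tsum fun n => ((hf.ennreal_ofReal.pow_const _).const_mul _).aemeasurable]
  exact tsum_congr fun n => lintegral_const_mul' _ _ ENNReal.ofReal_ne_top

end

/-- **Lemma (comparison of bridge local times).**  Let `P^y` be the law of a
Brownian bridge from `0` at time `0` to `y` at time `1` (realized as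
`X_t = β_t − t β₁ + t y` for a standard Brownian motion `β`) and `K₁(a)` its
local time at level `a` up to time `1`.  Then for every `a > 0` and `y ≥ 0`,
`E^y[exp(4a K₁(y)²)] ≤ E^0[exp(4a K₁(0)²)]` and
`E^y[exp(4a K₁(−y)²)] ≤ E^0[exp(4a K₁(0)²)]`. -/
theorem bridge_local_time_comparison (y : ℝ) (hy : 0 ≤ y)
    (Ω₁ : Type) [MeasurableSpace Ω₁] (P₁ : Measure Ω₁) (β₁ : ℝ → Ω₁ → ℝ)
    (hβ₁ : IsBrownianMotion P₁ β₁) (Ky : ℝ → ℝ → Ω₁ → ℝ)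
    (hKy : IsLocalTimeField P₁ (fun t ω => β₁ t ω - t * β₁ 1 ω + t * y) Ky)
    (Ω₂ : Type) [MeasurableSpace Ω₂] (P₂ : Measure Ω₂) (β₂ : ℝ → Ω₂ → ℝ)
    (hβ₂ : IsBrownianMotion P₂ β₂) (K0 : ℝ → ℝ → Ω₂ → ℝ)
    (hK0 : IsLocalTimeField P₂ (fun t ω => β₂ t ω - t * β₂ 1 ω) K0) :
    ∀ a : ℝ, 0 < a →
      (∫⁻ ω, ENNReal.ofReal (Real.exp (4 * a * Ky 1 y ω ^ 2)) ∂P₁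
        ≤ ∫⁻ ω, ENNReal.ofReal (Real.exp (4 * a * K0 1 0 ω ^ 2)) ∂P₂) ∧
      (∫⁻ ω, ENNReal.ofReal (Real.exp (4 * a * Ky 1 (-y) ω ^ 2)) ∂P₁
        ≤ ∫⁻ ω, ENNReal.ofReal (Real.exp (4 * a * K0 1 0 ω ^ 2)) ∂P₂) := by
  intro a ha
  have key : ∀ b : ℝ, ∫⁻ ω, ENNReal.ofReal (Real.exp (4 * a * Ky 1 b ω ^ 2)) ∂P₁
      ≤ ∫⁻ ω, ENNReal.ofReal (Real.exp (4 * a * K0 1 0 ω ^ 2)) ∂P₂ := by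
    intro b
    rw [lintegral_exp_sq_eq_tsum P₁ (hKy.meas 1 b) (hKy.nonneg 1 b) (by positivity),
      lintegral_exp_sq_eq_tsum P₂ (hK0.meas 1 0) (hK0.nonneg 1 0) (by positivity)]
    refine ENNReal.tsum_le_tsum fun n => ?_
    gcongr
    exact (lintegral_bridge_localTime_pow_le hβ₁ y hKy b _).trans
      (bridgeMoment_le_lintegral_localTime_pow hβ₂ hK0 _)
  exact ⟨key y, key (-y)⟩
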